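/- If V is a commutative and periodic element of the lattice MON of monoid varieties (i.e., (xy, yx) ∈ θ_V and (x^p, x^{p+k}) ∈ θ_V for some p, k ≥ 1), then there exists n ≥ 1 such that V = A_n ⊔ M, where M is one of the following elements of MON: ⊥ (the trivial variety), SL = ⟪{(x²,x),(xy,yx)}⟫, or C_m = ⟪{(x^m, x^{m+1}),(xy,yx)}⟫ for some m ≥ 2. -/

import Mathlib

/-!
In a monoid variety every identity `u ≈ v` may be restricted to a single letter `a` by sending all
other letters to `1`; the result is `x ^ (occ a u) ≈ x ^ (occ a v)`. If the variety is commutative,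
these one-letter consequences jointly imply `u ≈ v` back (`rel_iff`), so a commutative variety is
determined by the additive congruence `i ∼ j ↔ θ (x ^ i) (x ^ j)` on `ℕ`.

For a periodic variety this congruence is that of a finite monogenic monoid: for an index `m` and a
period `n ≥ 1`, `i ∼ j` iff `i = j`, or `m ≤ i, j` and `i ≡ j [MOD n]` (`exists_index_period`).
It is the intersection of congruence modulo `n`, which belongs to `Aₙ`, and of the congruence
with `i = j` or `m ≤ i, j`, which belongs to the trivial variety (`m = 0`), to `SL` (`m = 1`) or to
`Cₘ` (`m ≥ 2`). As joins of varieties are intersections of congruences, `V = Aₙ ⊔ M`.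
-/

/-- The free monoid over a countably infinite alphabet. -/
abbrev F : Type := FreeMonoid ℕ

/-- A congruence on the free monoid is fully invariant if it is stable
under every monoid endomorphism. -/
def IsFullyInvariant (c : Con F) : Prop :=
  ∀ f : F →* F, ∀ u v : F, c u v → c (f u) (f v)

/-- The type of fully invariant congruences on `F`. -/
abbrev FICon : Type := {c : Con F // IsFullyInvariant c}

/-- The smallest fully invariant congruence containing a set of pairs of words. -/
def fiGen (S : Set (F × F)) : Con F :=
  sInf {c : Con F | IsFullyInvariant c ∧ ∀ p ∈ S, c p.1 p.2}

lemma fiGen_apply (S : Set (F × F)) (u v : F) :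
    fiGen S u v ↔ ∀ c : Con F, (IsFullyInvariant c ∧ ∀ p ∈ S, c p.1 p.2) → c u v :=
  ⟨fun h c hc => h c hc, fun h c hc => h c hc⟩

lemma isFullyInvariant_fiGen (S : Set (F × F)) : IsFullyInvariant (fiGen S) := by
  intro f u v h
  rw [fiGen_apply] at h ⊢
  exact fun c hc => hc.1 f u v (h c hc)

/-- The fully invariant closure of a congruence, as an element of `FICon`. -/
def fiCl (c : Con F) : FICon :=
  ⟨fiGen {p | c p.1 p.2}, isFullyInvariant_fiGen _⟩

lemma le_fiCl (c : Con F) : c ≤ (fiCl c).val := by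
  refine le_sInf fun b hb => ?_
  rw [Con.le_def]
  exact fun {u v} huv => hb.2 (u, v) huv

lemma fiGC : GaloisConnection fiCl (Subtype.val : FICon → Con F) := by
  intro c d
  constructor
  · exact fun h => le_trans (le_fiCl c) h
  · intro h
    have hle : (fiCl c).val ≤ d.val :=
      sInf_le ⟨d.2, fun p hp => (Con.le_def.mp h) hp⟩
    exact hle

/-- The Galois insertion between congruences and fully invariant congruences. -/
def fiGI : GaloisInsertion fiCl (Subtype.val : FICon → Con F) :=
  fiGC.toGaloisInsertion fun d => le_fiCl d.val

noncomputable instance : CompleteLattice FICon := fiGI.liftCompleteLattice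

/-- The lattice of monoid varieties: the order dual of the lattice of fully
invariant congruences on the free monoid `F`. -/
abbrev MON : Type := FIConᵒᵈ

/-- The monoid variety given by the identity system `S`. -/
def gen (S : Set (F × F)) : MON :=
  OrderDual.toDual ⟨fiGen S, isFullyInvariant_fiGen S⟩

/-- The fully invariant congruence (equational theory) of a monoid variety. -/
def theta (V : MON) : Con F := (OrderDual.ofDual V).val

/-- Fixed pairwise distinct letters. -/
def x : F := FreeMonoid.of 0
def y : F := FreeMonoid.of 1
def z : F := FreeMonoid.of 2
def r : F := FreeMonoid.of 3

/-- The content of a word: the set of letters occurring in it. -/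
def con (w : F) : Set ℕ := {a | a ∈ FreeMonoid.toList w}

/-- The set of letters that are simple in a word (occur exactly once). -/
def simpleIn (w : F) : Set ℕ := {a | (FreeMonoid.toList w).count a = 1}

/-- Neutral element of a lattice. -/
def IsNeutralElt {L : Type*} [Lattice L] (a : L) : Prop :=
  ∀ y z : L, (a ⊔ y) ⊓ (y ⊔ z) ⊓ (z ⊔ a) = (a ⊓ y) ⊔ (y ⊓ z) ⊔ (z ⊓ a)

/-- Costandard element of a lattice. -/
def IsCostandardElt {L : Type*} [Lattice L] (a : L) : Prop :=
  ∀ y z : L, (a ⊓ y) ⊔ z = (a ⊔ z) ⊓ (y ⊔ z)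

/-- Codistributive element of a lattice. -/
def IsCodistributiveElt {L : Type*} [Lattice L] (a : L) : Prop :=
  ∀ y z : L, a ⊓ (y ⊔ z) = (a ⊓ y) ⊔ (a ⊓ z)

/-- Modular element of a lattice. -/
def IsModularElt {L : Type*} [Lattice L] (a : L) : Prop :=
  ∀ y z : L, y ≤ z → (a ⊔ y) ⊓ z = (a ⊓ z) ⊔ y

/-- Upper-modular element of a lattice. -/
def IsUpperModularElt {L : Type*} [Lattice L] (a : L) : Prop :=
  ∀ y z : L, y ≤ a → a ⊓ (y ⊔ z) = y ⊔ (a ⊓ z)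

/-- Lower-modular element of a lattice. -/
def IsLowerModularElt {L : Type*} [Lattice L] (a : L) : Prop :=
  ∀ y z : L, a ≤ y → a ⊔ (y ⊓ z) = y ⊓ (a ⊔ z)

/-- The variety `SL` of semilattice monoids. -/
def SLv : MON := gen {(x*x, x), (x*y, y*x)}

/-- The variety `C₂`. -/
def C2v : MON := gen {(x*x, x*x*x), (x*y, y*x)}

/-- The variety `Cₙ`. -/
def Cv (n : ℕ) : MON := gen {(x^n, x^(n+1)), (x*y, y*x)}

/-- The variety `Aₙ` of Abelian groups of exponent dividing `n`. -/
def Av (n : ℕ) : MON := gen {(x^n, 1), (x*y, y*x)}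

/-- The variety `D`. -/
def Dv : MON := gen {(x*x, x*x*x), (x*x*y, x*y*x), (x*y*x, y*x*x)}

/-- The variety `B₂,₃`. -/
def Bv : MON := gen {(x*x, x*x*x)}

/-- The word `s = yxyzxz`. -/
def s : F := y*x*y*z*x*z

/-- The word `t = yxzxyxz`. -/
def t : F := y*x*z*x*y*x*z

/-- The variety `Q`. -/
def Qv : MON := gen {(s, t)}

/-- The variety `F` (denoted `Fv` to avoid a clash with the free monoid). -/
def Fv : MON :=
  gen {(x*y*x, x*y*x*x), (x*x*y*y, y*y*x*x), (x*x*y, x*x*y*x), (x*y*r*x*y, y*x*r*x*y)}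

/-! ### Congruences on words from congruences on exponents -/

/-- The number of occurrences of the letter `a` in the word `u`. -/
def occ (a : ℕ) (u : F) : ℕ := (FreeMonoid.toList u).count a

/-- The fully invariant congruence on `F` of all identities that hold, for every valuation, in the
quotient of `(ℕ, +)` by the additive congruence `R`. -/
def conOfNat (R : AddCon ℕ) : Con F where
  r u v := ∀ φ : F →* Multiplicative ℕ, R (φ u).toAdd (φ v).toAdd
  iseqv := ⟨fun _ _ => R.refl _, fun h φ => R.symm (h φ), fun h h' φ => R.trans (h φ) (h' φ)⟩
  mul' h h' φ := by simpa using R.add (h φ) (h' φ)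

lemma isFullyInvariant_conOfNat (R : AddCon ℕ) : IsFullyInvariant (conOfNat R) :=
  fun f _ _ h φ => h (φ.comp f)

lemma occ_of_conOfNat {R : AddCon ℕ} {u v : F} (h : conOfNat R u v) (a : ℕ) :
    R (occ a u) (occ a v) := h (FreeMonoid.count a)

/-- The additive congruence on `ℕ` identifying all numbers that are at least `m`. -/
def tailCon (m : ℕ) : AddCon ℕ where
  r i j := i = j ∨ (m ≤ i ∧ m ≤ j)
  iseqv := ⟨fun _ => Or.inl rfl, by omega, by omega⟩
  add' := by intros; omega

lemma tailCon_iff (m i j : ℕ) : tailCon m i j ↔ i = j ∨ (m ≤ i ∧ m ≤ j) := Iff.rfl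

/-- Congruence modulo `n`, as an additive congruence on `ℕ`. -/
def modCon (n : ℕ) : AddCon ℕ where
  r i j := i ≡ j [MOD n]
  iseqv := ⟨fun _ => Nat.ModEq.refl _, Nat.ModEq.symm, Nat.ModEq.trans⟩
  add' := Nat.ModEq.add

lemma modCon_iff (n i j : ℕ) : modCon n i j ↔ i ≡ j [MOD n] := Iff.rfl

/-! ### Commutative identities and their one-letter consequences -/

lemma map_eq_prod {Q : Type*} [CommMonoid Q] (φ : F →* Q) (u : F) (S : Finset ℕ)
    (hS : (FreeMonoid.toList u).toFinset ⊆ S) :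
    φ u = ∏ a ∈ S, φ (FreeMonoid.of a) ^ occ a u := by
  have h1 : φ u = ((FreeMonoid.toList u).map (fun a => φ (FreeMonoid.of a))).prod := by
    conv_lhs => rw [← FreeMonoid.lift_restrict φ]
    rw [FreeMonoid.lift_apply]
    rfl
  rw [h1, Finset.prod_list_map_count]
  refine Finset.prod_subset hS fun a _ ha => ?_
  have : (FreeMonoid.toList u).count a = 0 := List.count_eq_zero.2 (by simpa using ha)
  simp [this]

lemma con_comm {c : Con F} (hc : IsFullyInvariant c) (hxy : c (x*y) (y*x)) (u v : F) :
    c (u*v) (v*u) := by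
  have := hc (FreeMonoid.lift (fun b => if b = 0 then u else v)) _ _ hxy
  simpa [x, y] using this

/-- A commutative fully invariant congruence is determined by its one-letter identities. -/
lemma rel_iff {c : Con F} (hc : IsFullyInvariant c) (hxy : c (x*y) (y*x)) (u v : F) :
    c u v ↔ ∀ a, c (x ^ occ a u) (x ^ occ a v) := by
  constructor
  · intro h a
    -- Substituting `1` for every letter other than `a` leaves a power of `x`.
    let f : F →* F := FreeMonoid.lift (fun b => if b = a then x else 1)
    have hf : ∀ w : F, f w = x ^ occ a w := by
      intro w
      induction w using FreeMonoid.inductionOn' with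
      | one => simp [occ]
      | of_mul b w ih =>
        by_cases hb : b = a
        · simp [f, occ, hb] at ih ⊢
          rw [ih, pow_succ']
        · simp [f, occ, hb] at ih ⊢
          exact ih
    rw [← hf, ← hf]
    exact hc f u v h
  · intro h
    let _ : CommMonoid c.Quotient :=
      { (inferInstance : Monoid c.Quotient) with
        mul_comm := by
          intro p q
          induction p, q using Con.induction_on₂ with
          | H u v => exact (c.eq).2 (con_comm hc hxy u v) }
    rw [← c.eq]
    change c.mk' u = c.mk' v
    let S := (FreeMonoid.toList u).toFinset ∪ (FreeMonoid.toList v).toFinset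
    rw [map_eq_prod c.mk' u S Finset.subset_union_left,
      map_eq_prod c.mk' v S Finset.subset_union_right]
    refine Finset.prod_congr rfl fun a _ => ?_
    rw [← map_pow, ← map_pow]
    have := hc (FreeMonoid.lift (fun _ => FreeMonoid.of a)) _ _ (h a)
    exact (c.eq).2 (by simpa [x] using this)

/-! ### Additive congruences on the natural numbers -/

/-- Structure of the nontrivial additive congruences on `ℕ`: they are given by an index `m` and a
period `n`. -/
lemma exists_index_period (R : AddCon ℕ) (hR : ∃ p k : ℕ, 1 ≤ k ∧ R p (p + k)) :
    ∃ m n : ℕ, 1 ≤ n ∧ ∀ i j, R i j ↔ tailCon m i j ∧ modCon n i j := by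
  classical
  let m := Nat.find hR
  have hm : ∃ k : ℕ, 1 ≤ k ∧ R m (m + k) := Nat.find_spec hR
  let n := Nat.find hm
  obtain ⟨hn, hmn⟩ : 1 ≤ n ∧ R m (m + n) := Nat.find_spec hm
  have hmul : ∀ q, R m (m + q * n) := by
    intro q
    induction q with
    | zero => simpa using R.refl m
    | succ q ih =>
      have := R.add ih (R.refl n)
      rw [show m + q * n + n = m + (q + 1) * n by ring] at this
      exact R.trans hmn this
  have hper : ∀ i q, m ≤ i → R i (i + q * n) := by
    intro i q hi
    obtain ⟨e, rfl⟩ := Nat.exists_eq_add_of_le hi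
    have := R.add (hmul q) (R.refl e)
    rwa [show m + q * n + e = m + e + q * n by ring] at this
  -- By symmetry it suffices to treat `i ≤ j`, that is, `j = i + d`.
  have key : ∀ i d, R i (i + d) ↔ tailCon m i (i + d) ∧ modCon n i (i + d) := by
    intro i d
    rcases Nat.eq_zero_or_pos d with rfl | hd
    · exact ⟨fun _ => ⟨(tailCon m).refl i, (modCon n).refl i⟩, fun _ => R.refl i⟩
    rw [tailCon_iff, modCon_iff, Nat.modEq_iff_dvd' (by omega), Nat.add_sub_cancel_left]
    constructor
    · intro h
      have hmi : m ≤ i := Nat.find_min' hR ⟨d, hd, h⟩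
      refine ⟨Or.inr ⟨hmi, by omega⟩, ?_⟩
      -- Since `m ∼ m + i * n` and `m + i * n ≥ i`, the relation `i ∼ i + d` transfers to `m`.
      have h1 : R m (m + d) := by
        have hi : i ≤ m + i * n := by nlinarith
        obtain ⟨e, he⟩ := Nat.exists_eq_add_of_le hi
        have h2 := R.add h (R.refl e)
        rw [← he, show i + d + e = m + d + i * n by omega] at h2
        exact R.trans (hmul i) (R.trans h2 (R.symm (hper (m + d) i (by omega))))
      have h3 : R m (m + d % n) := by
        have h4 := hper (m + d % n) (d / n) (by omega)
        rw [show m + d % n + d / n * n = m + d by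
          rw [add_assoc, Nat.mod_add_div']] at h4
        exact R.trans h1 (R.symm h4)
      by_contra hnd
      have h5 : 1 ≤ d % n := Nat.pos_of_ne_zero fun h0 => hnd (Nat.dvd_of_mod_eq_zero h0)
      have h6 : n ≤ d % n := Nat.find_min' hm ⟨h5, h3⟩
      exact absurd (Nat.mod_lt d hn) (by omega)
    · rintro ⟨h, q, rfl⟩
      rw [mul_comm]
      exact hper i q (by omega)
  refine ⟨m, n, hn, fun i j => ?_⟩
  rcases le_total i j with h | h
  · obtain ⟨d, rfl⟩ := Nat.exists_eq_add_of_le h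
    exact key i d
  · obtain ⟨d, rfl⟩ := Nat.exists_eq_add_of_le h
    exact ⟨fun h' => ((key j d).1 (R.symm h')).imp (tailCon m).symm (modCon n).symm,
      fun h' => R.symm ((key j d).2 (h'.imp (tailCon m).symm (modCon n).symm))⟩

/-! ### The equational theories of the varieties involved -/

lemma theta_fi (V : MON) : IsFullyInvariant (theta V) := (OrderDual.ofDual V).2

lemma theta_mono {V W : MON} (h : V ≤ W) : theta W ≤ theta V := h

lemma le_of_theta {V W : MON} (h : theta W ≤ theta V) : V ≤ W := h

lemma theta_gen {S : Set (F × F)} {u v : F} (h : (u, v) ∈ S) : theta (gen S) u v :=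
  (fiGen_apply S u v).2 fun _ hc => hc.2 _ h

/-- If the defining identities hold in `ℕ / R`, then every identity of the variety relates the
numbers of occurrences of each letter by `R`. -/
lemma theta_gen_le {S : Set (F × F)} {R : AddCon ℕ} (h : ∀ p ∈ S, conOfNat R p.1 p.2) {u v : F}
    (huv : theta (gen S) u v) (a : ℕ) : R (occ a u) (occ a v) :=
  occ_of_conOfNat ((fiGen_apply S u v).1 huv _ ⟨isFullyInvariant_conOfNat R, h⟩) a

/-- The additive congruence on exponents of `x` induced by a fully invariant congruence. -/
def natCon (V : MON) : AddCon ℕ where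
  r i j := theta V (x ^ i) (x ^ j)
  iseqv := ⟨fun _ => (theta V).refl _, fun h => (theta V).symm h,
    fun h h' => (theta V).trans h h'⟩
  add' h h' := by simpa only [pow_add] using (theta V).mul h h'

lemma natCon_iff (V : MON) (i j : ℕ) : natCon V i j ↔ theta V (x ^ i) (x ^ j) := Iff.rfl

lemma theta_iff {V : MON} (hxy : theta V (x*y) (y*x)) (u v : F) :
    theta V u v ↔ ∀ a, natCon V (occ a u) (occ a v) := rel_iff (theta_fi V) hxy u v

lemma modCon_le {V : MON} {n : ℕ} (h : natCon V n 0) {i j : ℕ} (hij : modCon n i j) :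
    natCon V i j := by
  have h0 : ∀ i q, natCon V (i + n * q) i := by
    intro i q
    have := (natCon V).add ((natCon V).refl i) ((natCon V).nsmul q h)
    simpa [mul_comm] using this
  have h1 : ∀ i, natCon V i (i % n) := by
    intro i
    have := h0 (i % n) (i / n)
    rwa [Nat.mod_add_div] at this
  have h2 := h1 i
  rw [show i % n = j % n from hij] at h2
  exact (natCon V).trans h2 ((natCon V).symm (h1 j))

lemma tailCon_le {V : MON} {m : ℕ} (h : natCon V m (m + 1)) {i j : ℕ} (hij : tailCon m i j) :
    natCon V i j := by
  have h0 : ∀ e, natCon V m (m + e) := by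
    intro e
    induction e with
    | zero => exact (natCon V).refl _
    | succ e ih =>
      have := (natCon V).add ih ((natCon V).refl 1)
      exact (natCon V).trans h this
  rcases hij with rfl | ⟨hi, hj⟩
  · exact (natCon V).refl _
  · obtain ⟨d, rfl⟩ := Nat.exists_eq_add_of_le hi
    obtain ⟨e, rfl⟩ := Nat.exists_eq_add_of_le hj
    exact (natCon V).trans ((natCon V).symm (h0 d)) (h0 e)

lemma conOfNat_comm (R : AddCon ℕ) (u v : F) : conOfNat R (u*v) (v*u) := by
  intro φ
  rw [φ.map_mul, φ.map_mul, mul_comm]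
  exact R.refl _

lemma theta_Av (n : ℕ) (u v : F) :
    theta (Av n) u v ↔ ∀ a, modCon n (occ a u) (occ a v) := by
  constructor
  · refine theta_gen_le ?_
    rintro p (rfl | rfl)
    · intro φ
      simp [modCon_iff, Nat.ModEq]
    · exact conOfNat_comm _ _ _
  · intro h
    refine (theta_iff (theta_gen (by simp)) u v).2 fun a => modCon_le (n := n) ?_ (h a)
    rw [natCon_iff, pow_zero]
    exact theta_gen (by simp)

lemma conOfNat_tailCon_pow (m : ℕ) : conOfNat (tailCon m) (x ^ m) (x ^ (m + 1)) := by
  intro φ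
  simp only [map_pow, toAdd_pow, smul_eq_mul, tailCon_iff]
  rcases Nat.eq_zero_or_pos (φ x).toAdd with h | h
  · left; simp [h]
  · right; constructor <;> nlinarith

lemma theta_Cv (m : ℕ) (u v : F) :
    theta (Cv m) u v ↔ ∀ a, tailCon m (occ a u) (occ a v) := by
  constructor
  · refine theta_gen_le ?_
    rintro p (rfl | rfl)
    · exact conOfNat_tailCon_pow m
    · exact conOfNat_comm _ _ _
  · intro h
    refine (theta_iff (theta_gen (by simp)) u v).2 fun a => tailCon_le (m := m) ?_ (h a)
    exact theta_gen (by simp)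

lemma theta_SLv (u v : F) :
    theta SLv u v ↔ ∀ a, tailCon 1 (occ a u) (occ a v) := by
  constructor
  · refine theta_gen_le ?_
    rintro p (rfl | rfl)
    · simpa [pow_two] using (conOfNat (tailCon 1)).symm (conOfNat_tailCon_pow 1)
    · exact conOfNat_comm _ _ _
  · intro h
    refine (theta_iff (theta_gen (by simp)) u v).2 fun a => tailCon_le (m := 1) ?_ (h a)
    rw [natCon_iff, pow_one, pow_two]
    exact (theta SLv).symm (theta_gen (by simp))

lemma theta_bot (u v : F) : theta (⊥ : MON) u v := by
  -- The all-relation is a fully invariant congruence, hence lies below that of `⊥`.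
  let W : MON := OrderDual.toDual ⟨⊤, fun _ _ _ _ => trivial⟩
  exact theta_mono (bot_le : (⊥ : MON) ≤ W) (x := u) (y := v) trivial

/-- The variety `M` whose theory is given by `tailCon m`: `⊥`, `SL` or `Cₘ` according to `m`. -/
lemma exists_tail_variety (m : ℕ) :
    ∃ M : MON, (M = ⊥ ∨ M = SLv ∨ ∃ m : ℕ, 2 ≤ m ∧ M = Cv m) ∧
      ∀ u v, theta M u v ↔ ∀ a, tailCon m (occ a u) (occ a v) := by
  rcases Nat.lt_or_ge m 2 with h | h
  · interval_cases m
    · exact ⟨⊥, Or.inl rfl, fun u v =>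
        ⟨fun _ _ => Or.inr ⟨Nat.zero_le _, Nat.zero_le _⟩, fun _ => theta_bot u v⟩⟩
    · exact ⟨SLv, Or.inr (Or.inl rfl), theta_SLv⟩
  · exact ⟨Cv m, Or.inr (Or.inr ⟨m, h, rfl⟩), theta_Cv m⟩

theorem statement6 (V : MON) (hcomm : theta V (x*y) (y*x))
    (hper : ∃ p k : ℕ, 1 ≤ p ∧ 1 ≤ k ∧ theta V (x^p) (x^(p+k))) :
    ∃ n : ℕ, 1 ≤ n ∧ ∃ M : MON,
      (M = ⊥ ∨ M = SLv ∨ ∃ m : ℕ, 2 ≤ m ∧ M = Cv m) ∧ V = Av n ⊔ M := by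
  obtain ⟨p, k, -, hk, hpk⟩ := hper
  obtain ⟨m, n, hn, hmn⟩ := exists_index_period (natCon V) ⟨p, k, hk, hpk⟩
  obtain ⟨M, hM, hMt⟩ := exists_tail_variety m
  refine ⟨n, hn, M, hM, le_antisymm (le_of_theta ?_) (sup_le (le_of_theta ?_) (le_of_theta ?_))⟩
  · intro u v h
    have hA : theta (Av n) u v := theta_mono (le_sup_left : Av n ≤ Av n ⊔ M) h
    have hM' : theta M u v := theta_mono (le_sup_right : M ≤ Av n ⊔ M) h
    rw [theta_Av] at hA
    rw [hMt] at hM'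
    exact (theta_iff hcomm u v).2 fun a => (hmn _ _).2 ⟨hM' a, hA a⟩
  · intro u v h
    exact (theta_Av n u v).2 fun a => ((hmn _ _).1 ((theta_iff hcomm u v).1 h a)).2
  · intro u v h
    exact (hMt u v).2 fun a => ((hmn _ _).1 ((theta_iff hcomm u v).1 h a)).1
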